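/- arXiv:2212.03786 — 6 statements merged into one kernel-verified Lean document; each statement's English description precedes it below -/
import Mathlib

section
/- Let Σ be a finite alphabet, let d ≥ 1, and let L₁ and L₂ be languages over Σ with L₁ ≠ L₂. Suppose that for every n ≥ 0 the symmetric difference (L₁ △ L₂) contains strictly fewer than 2^(d-1) words of length n. Then L₁ and L₂ are not d-similar; that is, there exist an n ≥ 0 and an assignment X of d×d real matrices to the letters of Σ such that the sum of the matrix products ∏X(w) over the words w of length n in L₁ differs from the corresponding sum over the words of length n in L₂. -/
open Classical in
/-- Generating polynomial of the occurrences of `a` in `w`, weighted by the suffix products. -/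
noncomputable def occPoly {α m : Type*} [Fintype m] [DecidableEq m] (X : α → Matrix m m ℝ)
    (a : α) (r s : m) : List α → Polynomial ℝ
  | [] => 0
  | b :: w => (if b = a then Polynomial.C ((w.map X).prod r s) else 0)
      + Polynomial.X * occPoly X a r s w

open Classical in
theorem occPoly_coeff {α m : Type*} [Fintype m] [DecidableEq m] (X : α → Matrix m m ℝ)
    (a : α) (r s : m) (w : List α) (i : ℕ) :
    (occPoly X a r s w).coeff i =
      if w[i]? = some a then ((w.drop (i + 1)).map X).prod r s else 0 := by
  induction w generalizing i with
  | nil => simp [occPoly]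
  | cons b w ih =>
    cases i with
    | zero =>
      by_cases h : b = a <;> simp [occPoly, h]
    | succ i =>
      by_cases h : b = a <;> simp [occPoly, h, ih, Polynomial.coeff_X_mul]

open Classical in
/-- The block extension by one new initial state. -/
noncomputable def extMat {α m : Type*} [Fintype m] [DecidableEq m] (X : α → Matrix m m ℝ)
    (a : α) (r : m) (t : ℝ) (b : α) : Matrix (Unit ⊕ m) (Unit ⊕ m) ℝ :=
  Matrix.fromBlocks (Matrix.of fun _ _ => t)
    (Matrix.of fun _ j => if b = a then (if r = j then 1 else 0) else 0) 0 (X b)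

theorem extMat_prod {α m : Type*} [Fintype m] [DecidableEq m] (X : α → Matrix m m ℝ)
    (a : α) (r : m) (t : ℝ) (w : List α) :
    ∃ T : Matrix Unit Unit ℝ, (w.map (extMat X a r t)).prod =
      Matrix.fromBlocks T (Matrix.of fun _ s => (occPoly X a r s w).eval t) 0
        (w.map X).prod := by
  induction w with
  | nil =>
    refine ⟨1, ?_⟩
    simp only [List.map_nil, List.prod_nil, occPoly, Polynomial.eval_zero]
    rw [← Matrix.fromBlocks_one]
    rfl
  | cons b w ih =>
    obtain ⟨T, hT⟩ := ih
    refine ⟨(Matrix.of fun _ _ => t) * T, ?_⟩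
    · rw [List.map_cons, List.prod_cons, hT, extMat, Matrix.fromBlocks_multiply, List.map_cons,
        List.prod_cons]
      congr 1
      · simp
      · ext u s
        by_cases h : b = a <;>
        simp [occPoly, Matrix.mul_apply, h, add_comm]
      · simp
      · simp

theorem exists_ne_zero_of_card_le {α ι : Type*} (k : ℕ) :
    ∀ (n : ℕ) (S : Finset ι) (W : ι → List α) (c : ι → ℝ), S.Nonempty → S.card ≤ 2 ^ k →
      (∀ i ∈ S, c i ≠ 0) → Set.InjOn W S → (∀ i ∈ S, (W i).length = n) →
      ∃ X : α → Matrix (Fin (k + 1)) (Fin (k + 1)) ℝ,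
        ∑ i ∈ S, c i • ((W i).map X).prod ≠ 0 := by
  classical
  have one : ∀ (k : ℕ) (S : Finset ι) (W : ι → List α) (c : ι → ℝ), S.card = 1 →
      (∀ i ∈ S, c i ≠ 0) → ∃ X : α → Matrix (Fin (k + 1)) (Fin (k + 1)) ℝ,
        ∑ i ∈ S, c i • ((W i).map X).prod ≠ 0 := by
    intro k S W c h hc
    obtain ⟨i, rfl⟩ := Finset.card_eq_one.1 h
    refine ⟨fun _ => 1, ?_⟩
    have := hc i (by simp)
    simp [this]
  induction k with
  | zero =>
    intro n S W c hS hcard hc _ _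
    exact one 0 S W c (le_antisymm (by simpa using hcard) hS.card_pos) hc
  | succ k ih =>
    intro n S W c hS hcard hc hinj hlen
    rcases Nat.eq_or_lt_of_le (Nat.succ_le_of_lt hS.card_pos) with h1 | h1
    · exact one (k + 1) S W c h1.symm hc
    have hex : ∃ i : ℕ, ∃ x ∈ S, ∃ y ∈ S, (W x)[i]? ≠ (W y)[i]? := by
      obtain ⟨x, hx, y, hy, hxy⟩ := Finset.one_lt_card.1 h1
      by_contra! hcon
      exact hxy (hinj hx hy (List.ext_getElem? fun i => hcon i x hx y hy))
    obtain ⟨x, hx, y, hy, hxy⟩ := Nat.find_spec hex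
    have hmin : ∀ j < Nat.find hex, ∀ x ∈ S, ∀ y ∈ S, (W x)[j]? = (W y)[j]? := by
      intro j hj
      have := Nat.find_min hex hj
      push Not at this
      exact this
    generalize Nat.find hex = p at *
    have hhalf : ∃ z ∈ S, 2 * (S.filter fun i => (W i)[p]? = (W z)[p]?).card ≤ S.card := by
      have hd : Disjoint (S.filter fun i => (W i)[p]? = (W x)[p]?)
          (S.filter fun i => (W i)[p]? = (W y)[p]?) := by
        rw [Finset.disjoint_filter]
        intro i _ h h'
        exact hxy (h.symm.trans h')
      have hle := Finset.card_le_card (Finset.union_subset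
        (Finset.filter_subset (fun i => (W i)[p]? = (W x)[p]?) S)
        (Finset.filter_subset (fun i => (W i)[p]? = (W y)[p]?) S))
      rw [Finset.card_union_of_disjoint hd] at hle
      rcases le_total (S.filter fun i => (W i)[p]? = (W x)[p]?).card
        (S.filter fun i => (W i)[p]? = (W y)[p]?).card with h | h
      · exact ⟨x, hx, by omega⟩
      · exact ⟨y, hy, by omega⟩
    obtain ⟨z, hz, hzc⟩ := hhalf
    have hpn : p < n := by
      by_contra! hcon
      apply hxy
      rw [List.getElem?_eq_none (by rw [hlen x hx]; exact hcon),
        List.getElem?_eq_none (by rw [hlen y hy]; exact hcon)]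
    obtain ⟨a, ha⟩ : ∃ a, (W z)[p]? = some a :=
      ⟨_, List.getElem?_eq_getElem (by rw [hlen z hz]; exact hpn)⟩
    rw [ha] at hzc
    obtain ⟨X, hX⟩ := ih (n - (p + 1)) (S.filter fun i => (W i)[p]? = some a)
      (fun i => (W i).drop (p + 1)) c ⟨z, by simp [hz, ha]⟩ (by rw [pow_succ] at hcard; omega)
      (fun i hi => hc i (Finset.mem_filter.1 hi).1) (by
        intro u hu v hv huv
        simp only [Finset.coe_filter, Set.mem_ofPred_eq] at hu hv
        refine hinj hu.1 hv.1 (List.ext_getElem? fun j => ?_)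
        rcases lt_trichotomy j p with h | h | h
        · exact hmin j h u hu.1 v hv.1
        · rw [h, hu.2, hv.2]
        · have := congrArg (fun l => l[j - (p + 1)]?) huv
          simp only [List.getElem?_drop] at this
          rwa [show p + 1 + (j - (p + 1)) = j by omega] at this)
      (fun i hi => by simp [hlen i (Finset.mem_filter.1 hi).1])
    obtain ⟨r, s, hrs⟩ : ∃ r s, (∑ i ∈ S.filter fun i => (W i)[p]? = some a,
        c i • (((W i).drop (p + 1)).map X).prod) r s ≠ 0 := by
      by_contra! hcon
      exact hX (by ext r s; exact hcon r s)
    have hP : (∑ i ∈ S, Polynomial.C (c i) * occPoly X a r s (W i)) ≠ 0 := by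
      intro h0
      apply hrs
      have := congrArg (fun q => Polynomial.coeff q p) h0
      simp only [Polynomial.finsetSum_coeff, Polynomial.coeff_C_mul, occPoly_coeff,
        Polynomial.coeff_zero] at this
      rw [Matrix.sum_apply, Finset.sum_filter]
      refine Eq.trans (Finset.sum_congr rfl fun i _ => ?_) this
      split_ifs <;> simp
    obtain ⟨t, ht⟩ : ∃ t : ℝ,
        (∑ i ∈ S, Polynomial.C (c i) * occPoly X a r s (W i)).eval t ≠ 0 := by
      by_contra! hcon
      exact hP (Polynomial.funext (by simpa using hcon))
    let e : Unit ⊕ Fin (k + 1) ≃ Fin (k + 1 + 1) := Fintype.equivOfCardEq (by simp; omega)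
    let E := Matrix.reindexAlgEquiv ℝ ℝ e
    refine ⟨fun b => E (extMat X a r t b), ?_⟩
    have hmap : ∀ w : List α, (w.map fun b => E (extMat X a r t b)).prod =
        E (w.map (extMat X a r t)).prod := by
      intro w
      rw [map_list_prod, List.map_map]
      rfl
    intro h0
    simp only [hmap, ← map_smul, ← map_sum] at h0
    rw [EmbeddingLike.map_eq_zero_iff] at h0
    apply ht
    have h2 := congrFun (congrFun h0 (Sum.inl ())) (Sum.inr s)
    rw [Matrix.sum_apply] at h2
    rw [Polynomial.eval_finsetSum]
    refine Eq.trans (Finset.sum_congr rfl fun i _ => ?_) h2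
    obtain ⟨T, hT⟩ := extMat_prod X a r t (W i)
    rw [hT]
    simp

/-- **Theorem (languages that are too close are not d-similar).**
If `L₁ ≠ L₂` are languages over a finite alphabet `α` and every length-`n` slice of the
symmetric difference `L₁ △ L₂` has fewer than `2^(d-1)` words, then `L₁` and `L₂` are not
`d`-similar: some assignment of `d×d` real matrices to the letters distinguishes some slice. -/
theorem not_d_similar_of_small_symmDiff
    {α : Type*} [Fintype α] (d : ℕ) (hd : 1 ≤ d)
    (L₁ L₂ : Set (List α)) (hne : L₁ ≠ L₂)
    (hsmall : ∀ n : ℕ, ({w ∈ symmDiff L₁ L₂ | w.length = n}).ncard < 2 ^ (d - 1)) :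
    ∃ (n : ℕ) (X : α → Matrix (Fin d) (Fin d) ℝ),
      (∑ᶠ w ∈ {w ∈ L₁ | w.length = n}, (w.map X).prod) ≠
      (∑ᶠ w ∈ {w ∈ L₂ | w.length = n}, (w.map X).prod) := by
  classical
  obtain ⟨w₀, hw₀⟩ : (symmDiff L₁ L₂).Nonempty := by
    rw [Set.nonempty_iff_ne_empty]
    intro h
    exact hne (symmDiff_eq_bot.1 h)
  obtain ⟨k, rfl⟩ : ∃ k, d = k + 1 := ⟨d - 1, by omega⟩
  have hfin : {w : List α | w.length = w₀.length}.Finite := List.finite_length_eq α _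
  set n := w₀.length with hn
  let U := hfin.toFinset
  have hU : ∀ w, w ∈ U ↔ w.length = n := by simp [U]
  let S := U.filter fun w => w ∈ symmDiff L₁ L₂
  let c : List α → ℝ := fun w => (if w ∈ L₁ then 1 else 0) - (if w ∈ L₂ then 1 else 0)
  have hScard : S.card ≤ 2 ^ k := by
    have := hsmall n
    have heq : {w ∈ symmDiff L₁ L₂ | w.length = n} = (S : Set (List α)) := by
      ext w
      simp [S, hU, and_comm]
    rw [heq, Set.ncard_coe_finset] at this
    simpa using this.le
  obtain ⟨X, hX⟩ := exists_ne_zero_of_card_le k n S id c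
    ⟨w₀, by simp only [S, Finset.mem_filter, hU]; exact ⟨hn.symm, hw₀⟩⟩ hScard (by
      intro w hw
      have := (Finset.mem_filter.1 hw).2
      rcases Set.mem_symmDiff.1 this with h | h <;> simp [c, h.1, h.2])
    (Function.injective_id.injOn) (fun w hw => (hU w).1 (Finset.mem_filter.1 hw).1)
  refine ⟨n, X, fun heq => hX ?_⟩
  have key : ∀ L : Set (List α), (∑ᶠ w ∈ {w ∈ L | w.length = n}, (w.map X).prod) =
      ∑ w ∈ U, (if w ∈ L then (1 : ℝ) else 0) • (w.map X).prod := by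
    intro L
    have : {w ∈ L | w.length = n} = ((U.filter fun w => w ∈ L : Finset (List α)) : Set _) := by
      ext w
      simp [hU, and_comm]
    rw [this, finsum_mem_coe_finset, Finset.sum_filter]
    refine Finset.sum_congr rfl fun w _ => ?_
    split_ifs <;> simp
  rw [key, key, ← sub_eq_zero, ← Finset.sum_sub_distrib] at heq
  rw [Finset.sum_filter]
  refine Eq.trans (Finset.sum_congr rfl fun w _ => ?_) heq
  by_cases h1 : w ∈ L₁ <;> by_cases h2 : w ∈ L₂ <;> simp [Set.mem_symmDiff, h1, h2, c]
end

section
/- Let Σ be a finite alphabet, let d ≥ 1, and let L₁ and L₂ be languages over Σ. Suppose there exists an n ≥ 0 such that the n-slices of L₁ and L₂ are different, and the symmetric difference (L₁ △ L₂) contains strictly fewer than 2^(d-1) words of length n. Then L₁ and L₂ are not d-similar; that is, there exist an m ≥ 0 and an assignment X of d×d real matrices to the letters of Σ such that the sum of the matrix products ∏X(w) over the words w of length m in L₁ differs from the corresponding sum over the words of length m in L₂. -/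
/-- Block matrix used in the inductive step. -/
noncomputable def blk {α : Type*} {k : ℕ} (X : α → Matrix (Fin k) (Fin k) ℝ) (a : α) (i : Fin k)
    (x : ℝ) (b : α) : Matrix (Unit ⊕ Fin k) (Unit ⊕ Fin k) ℝ :=
  open Classical in
  Matrix.fromBlocks (Matrix.of fun _ _ => x)
    (Matrix.of fun _ j => if b = a then (1 : Matrix (Fin k) (Fin k) ℝ) i j else 0) 0 (X b)

lemma blk_prod {α : Type*} {k : ℕ} (X : α → Matrix (Fin k) (Fin k) ℝ) (a : α) (i : Fin k)
    (x : ℝ) (w : List α) :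
    (∀ j, (w.map (blk X a i x)).prod (Sum.inr j) (Sum.inl ()) = 0) ∧
    (∀ j l, (w.map (blk X a i x)).prod (Sum.inr j) (Sum.inr l) = (w.map X).prod j l) := by
  induction w with
  | nil => simp [Matrix.one_apply]
  | cons b w ih =>
    obtain ⟨h1, h2⟩ := ih
    refine ⟨fun j => ?_, fun j l => ?_⟩
    · simp [Matrix.mul_apply, h1, blk]
    · simp [Matrix.mul_apply, h2, blk]

lemma blk_zero {α : Type*} [DecidableEq α] {k : ℕ} (X : α → Matrix (Fin k) (Fin k) ℝ)
    (a : α) (i j : Fin k) (b : α) (w : List α) :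
    ((b :: w).map (blk X a i 0)).prod (Sum.inl ()) (Sum.inr j)
      = if b = a then (w.map X).prod i j else 0 := by
  have h2 := (blk_prod X a i 0 w).2
  rw [List.map_cons, List.prod_cons, Matrix.mul_apply]
  by_cases hb : b = a
  · simp [h2, blk, hb, Matrix.one_apply]
  · simp [blk, hb]

lemma blk_cont {α : Type*} {k : ℕ} (X : α → Matrix (Fin k) (Fin k) ℝ) (a : α) (i : Fin k)
    (w : List α) : Continuous fun x => (w.map (blk X a i x)).prod := by
  induction w with
  | nil => simpa using continuous_const
  | cons b w ih =>
    simp only [List.map_cons, List.prod_cons]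
    refine Continuous.mul ?_ ih
    unfold blk
    refine Continuous.matrix_fromBlocks ?_ continuous_const continuous_const continuous_const
    exact continuous_matrix fun _ _ => continuous_id

lemma key_lemma {α : Type*} : ∀ (k n : ℕ) (S : Finset (List α)) (c : List α → ℝ),
    (∀ w ∈ S, w.length = n) → S.Nonempty → S.card < 2 ^ k → (∀ w ∈ S, c w ≠ 0) →
    ∃ X : α → Matrix (Fin k) (Fin k) ℝ, (∀ b, IsUnit (X b)) ∧
      ∑ w ∈ S, c w • (w.map X).prod ≠ 0 := by
  classical
  intro k
  induction k with
  | zero =>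
    intro n S c _ hne hcard _
    have := hne.card_pos
    simp at hcard
    simp [hcard] at this
  | succ k ihk =>
    intro n
    induction n with
    | zero =>
      intro S c hlen hne _ hc
      have hS : S = {[]} := by
        refine Finset.eq_singleton_iff_nonempty_unique_mem.2 ⟨hne, fun w hw => ?_⟩
        exact List.length_eq_zero_iff.1 (hlen w hw)
      subst hS
      refine ⟨fun _ => 1, fun _ => isUnit_one, ?_⟩
      simpa using hc
    | succ n ihn =>
      intro S c hlen hne hcard hc
      let T : α → Finset (List α) := fun a => S.preimage (List.cons a) (List.cons_injective.injOn)
      have hT : ∀ a v, v ∈ T a ↔ a :: v ∈ S := fun a v => Finset.mem_preimage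
      have hTc : ∀ a, (T a).card = (S.filter fun w => w.head? = some a).card := by
        intro a
        rw [← Finset.card_image_of_injective (T a) (List.cons_injective (a := a))]
        congr 1
        ext w
        rcases w with _ | ⟨b, v⟩ <;> simp [hT]
        constructor
        · rintro ⟨h, rfl⟩; exact ⟨h, rfl⟩
        · rintro ⟨h, rfl⟩; exact ⟨h, rfl⟩
      have hTlen : ∀ a, ∀ v ∈ T a, v.length = n := by
        intro a v hv
        simpa using hlen _ ((hT a v).1 hv)
      have hcons : ∀ w ∈ S, ∃ b v, w = b :: v := fun w hw =>
        List.exists_cons_of_length_eq_add_one (hlen w hw)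
      obtain ⟨w0, hw0⟩ := hne
      obtain ⟨b, v0, rfl⟩ := hcons w0 hw0
      by_cases hall : ∀ w ∈ S, w.head? = some b
      · obtain ⟨X, hX, hs⟩ := ihn (T b) (fun v => c (b :: v)) (hTlen b) ⟨v0, (hT _ _).2 hw0⟩
          (by rw [hTc]; exact (Finset.card_filter_le _ _).trans_lt hcard)
          (fun v hv => hc _ ((hT _ _).1 hv))
        refine ⟨X, hX, ?_⟩
        have hS : S = (T b).image (List.cons b) := by
          ext w
          constructor
          · intro hw
            obtain ⟨b', v, rfl⟩ := hcons w hw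
            have := hall _ hw
            simp at this
            subst this
            exact Finset.mem_image_of_mem _ ((hT _ _).2 hw)
          · intro hw
            obtain ⟨v, hv, rfl⟩ := Finset.mem_image.1 hw
            exact (hT _ _).1 hv
        have : ∑ w ∈ S, c w • (w.map X).prod
            = X b * ∑ v ∈ T b, c (b :: v) • (v.map X).prod := by
          conv_lhs => rw [hS]
          rw [Finset.sum_image (List.cons_injective.injOn), Finset.mul_sum]
          simp
        rw [this]
        intro h0
        exact hs ((hX b).mul_right_eq_zero.1 h0)
      · push Not at hall
        obtain ⟨w1, hw1, hne1⟩ := hall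
        obtain ⟨b', v1, rfl⟩ := hcons w1 hw1
        have hbb : b' ≠ b := by simpa using hne1
        have hex : ∃ a, (T a).Nonempty ∧ (T a).card < 2 ^ k := by
          have hle : (T b).card + (T b').card ≤ S.card := by
            rw [hTc, hTc, ← Finset.card_union_of_disjoint]
            · exact Finset.card_le_card (Finset.union_subset (Finset.filter_subset _ _)
                (Finset.filter_subset _ _))
            · rw [Finset.disjoint_filter]
              intro w _ h1 h2
              rw [h1] at h2
              exact hbb (by simpa using h2.symm)
          rw [pow_succ] at hcard
          by_cases h : (T b).card < 2 ^ k
          · exact ⟨b, ⟨v0, (hT _ _).2 hw0⟩, h⟩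
          · exact ⟨b', ⟨v1, (hT _ _).2 hw1⟩, by omega⟩
        obtain ⟨a, hane, hacard⟩ := hex
        obtain ⟨X, hX, hs⟩ := ihk n (T a) (fun v => c (a :: v)) (hTlen a) hane hacard
          (fun v hv => hc _ ((hT _ _).1 hv))
        obtain ⟨i, j, hij⟩ : ∃ i j, (∑ v ∈ T a, c (a :: v) • (v.map X).prod) i j ≠ 0 := by
          by_contra hcon
          push Not at hcon
          exact hs (Matrix.ext hcon)
        let f : ℝ → ℝ := fun x =>
          (∑ w ∈ S, c w • (w.map (blk X a i x)).prod) (Sum.inl ()) (Sum.inr j)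
        have hf : Continuous f := by
          refine Continuous.matrix_elem (continuous_finset_sum _ fun w _ => ?_) _ _
          exact (blk_cont X a i w).const_smul (c w)
        have hf0 : f 0 ≠ 0 := by
          have : f 0 = (∑ v ∈ T a, c (a :: v) • (v.map X).prod) i j := by
            simp only [f, Matrix.sum_apply, Matrix.smul_apply]
            have e1 : ∑ v ∈ T a, c (a :: v) • (v.map X).prod i j
                = ∑ w ∈ (T a).image (List.cons a),
                  c w • (w.map (blk X a i 0)).prod (Sum.inl ()) (Sum.inr j) := by
              rw [Finset.sum_image (List.cons_injective.injOn)]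
              refine Finset.sum_congr rfl fun v _ => ?_
              rw [blk_zero, if_pos rfl]
            rw [e1]
            symm
            refine Finset.sum_subset ?_ ?_
            · intro w hw
              obtain ⟨v, hv, rfl⟩ := Finset.mem_image.1 hw
              exact (hT _ _).1 hv
            · intro w hw hnot
              obtain ⟨b2, v, rfl⟩ := hcons w hw
              rw [blk_zero, if_neg, smul_zero]
              rintro rfl
              exact hnot (Finset.mem_image_of_mem _ ((hT _ _).2 hw))
          rwa [this]
        obtain ⟨x, hx, hx0⟩ : ∃ x, f x ≠ 0 ∧ x ≠ 0 := by
          have h1 : ∀ᶠ x in nhdsWithin (0 : ℝ) {0}ᶜ, f x ≠ 0 :=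
            (hf.continuousAt.eventually_ne hf0).filter_mono nhdsWithin_le_nhds
          exact (h1.and self_mem_nhdsWithin).exists
        have e : Unit ⊕ Fin k ≃ Fin (k + 1) := Fintype.equivOfCardEq (by simp [add_comm])
        let φ := Matrix.reindexAlgEquiv ℝ ℝ e
        refine ⟨fun b => φ (blk X a i x b), fun b => ?_, ?_⟩
        · refine IsUnit.map φ ?_
          unfold blk
          rw [Matrix.isUnit_fromBlocks_zero₂₁]
          refine ⟨?_, hX b⟩
          rw [Matrix.isUnit_iff_isUnit_det]
          simpa using hx0
        · have : ∑ w ∈ S, c w • (w.map fun b => φ (blk X a i x b)).prod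
              = φ (∑ w ∈ S, c w • (w.map (blk X a i x)).prod) := by
            rw [map_sum]
            refine Finset.sum_congr rfl fun w _ => ?_
            rw [map_smul, map_list_prod, List.map_map]
            rfl
          rw [this]
          intro h0
          apply hx
          have := (map_eq_zero_iff φ φ.injective).1 h0
          simp only [f, this, Matrix.zero_apply]


/-- **Theorem (stronger variant).** If for *some* `n` the `n`-slices of `L₁` and `L₂` differ,
but the symmetric difference `L₁ △ L₂` contains fewer than `2^(d-1)` words of length `n`,
then `L₁` and `L₂` are not `d`-similar: some assignment of `d×d` real matrices to the letters
distinguishes some slice. -/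
theorem not_d_similar_of_some_small_slice_diff
    {α : Type*} [Fintype α] (d : ℕ) (hd : 1 ≤ d)
    (L₁ L₂ : Set (List α))
    (h : ∃ n : ℕ, {w ∈ L₁ | w.length = n} ≠ {w ∈ L₂ | w.length = n} ∧
      ({w ∈ symmDiff L₁ L₂ | w.length = n}).ncard < 2 ^ (d - 1)) :
    ∃ (m : ℕ) (X : α → Matrix (Fin d) (Fin d) ℝ),
      (∑ᶠ w ∈ {w ∈ L₁ | w.length = m}, (w.map X).prod) ≠
      (∑ᶠ w ∈ {w ∈ L₂ | w.length = m}, (w.map X).prod) := by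
  classical
  obtain ⟨n, hne, hcard⟩ := h
  have hfin : ∀ L : Set (List α), {w ∈ L | w.length = n}.Finite := fun L =>
    (List.finite_length_eq α n).subset fun w hw => hw.2
  let S := (hfin (symmDiff L₁ L₂)).toFinset
  let c : List α → ℝ := fun w => (if w ∈ L₁ then 1 else 0) - (if w ∈ L₂ then 1 else 0)
  have hS : ∀ w, w ∈ S ↔ w ∈ symmDiff L₁ L₂ ∧ w.length = n := fun w => by simp [S]
  have hSne : S.Nonempty := by
    by_contra hcon
    rw [Finset.not_nonempty_iff_eq_empty] at hcon
    apply hne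
    ext w
    have h1 := hS w
    rw [hcon, Set.mem_symmDiff] at h1
    simp only [Finset.notMem_empty, false_iff] at h1
    simp only [Set.mem_setOf_eq]
    tauto
  have hc : ∀ w ∈ S, c w ≠ 0 := by
    intro w hw
    rw [hS, Set.mem_symmDiff] at hw
    rcases hw.1 with ⟨h1, h2⟩ | ⟨h1, h2⟩ <;> simp [c, h1, h2]
  obtain ⟨X, -, hX⟩ := key_lemma d n S c (fun w hw => ((hS w).1 hw).2) hSne (by
    rw [Set.ncard_eq_toFinset_card _ (hfin _)] at hcard
    exact hcard.trans_le (Nat.pow_le_pow_right (by norm_num) (Nat.sub_le _ _))) hc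
  refine ⟨n, X, fun heq => hX ?_⟩
  let U := (List.finite_length_eq α n).toFinset
  have hU : ∀ w, w ∈ U ↔ w.length = n := fun w => by simp [U]
  have hsum : ∀ L : Set (List α), (∑ᶠ w ∈ {w ∈ L | w.length = n}, (w.map X).prod)
      = ∑ w ∈ U, (if w ∈ L then (1 : ℝ) else 0) • (w.map X).prod := by
    intro L
    rw [finsum_mem_eq_finite_toFinset_sum _ (hfin L)]
    simp only [ite_smul, one_smul, zero_smul]
    rw [← Finset.sum_filter]
    refine Finset.sum_congr ?_ fun _ _ => rfl
    ext w
    simp [hU, and_comm]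
  rw [hsum, hsum, ← sub_eq_zero, ← Finset.sum_sub_distrib] at heq
  rw [← heq]
  simp only [← sub_smul]
  refine Finset.sum_subset (fun w hw => (hU w).2 ((hS w).1 hw).2) fun w hw hnot => ?_
  have hw' := (hU w).1 hw
  rw [hS, Set.mem_symmDiff] at hnot
  have : c w = 0 := by
    by_cases h1 : w ∈ L₁ <;> by_cases h2 : w ∈ L₂ <;> simp_all [c]
  rw [this, zero_smul]
end

section
/- (Amitsur–Levitsky theorem.) Let R be a commutative ring, let d ≥ 1, and let X₁, X₂, …, X_{2d} be d×d matrices over R. Then the sum over all permutations σ of {1, …, 2d} of (sign σ) · X_{σ(1)} · X_{σ(2)} · … · X_{σ(2d)} equals the zero matrix. -/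
open Polynomial in
theorem al_jacobi {C : Type*} [CommRing C] {d : ℕ} (M : Matrix (Fin d) (Fin d) C[X]) :
    derivative M.det = (M.adjugate * M.map derivative).trace := by
  have h1 : ∀ i, (M.adjugate * M.map derivative) i i
      = (M.updateCol i (fun k => derivative (M k i))).det := by
    intro i
    rw [← Matrix.cramer_apply, Matrix.cramer_eq_adjugate_mulVec]
    rfl
  simp only [Matrix.trace, Matrix.diag_apply, h1]
  simp only [Matrix.det_apply, derivative_sum]
  rw [Finset.sum_comm]
  refine Finset.sum_congr rfl fun σ _ => ?_
  rw [← Finset.smul_sum, Units.smul_def, Units.smul_def, derivative_smul, derivative_prod_finset]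
  congr 1
  refine Finset.sum_congr rfl fun i _ => ?_
  rw [← Finset.mul_prod_erase _ _ (Finset.mem_univ i), mul_comm]
  simp only [Matrix.updateCol_self]
  congr 1
  refine Finset.prod_congr rfl fun j hj => ?_
  rw [Matrix.updateCol_ne (Finset.ne_of_mem_erase hj)]

open Polynomial in
theorem al_nilp {C : Type*} [CommRing C] (htf : ∀ n : ℕ, n ≠ 0 → ∀ x : C, (n : C) * x = 0 → x = 0)
    {d : ℕ} (B : Matrix (Fin d) (Fin d) C) (htr : ∀ k : ℕ, (B ^ (k + 1)).trace = 0) :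
    B ^ d = 0 := by
  nontriviality C
  set N : Matrix (Fin d) (Fin d) C[X] := Polynomial.C.mapMatrix B with hN
  set P : Matrix (Fin d) (Fin d) C[X] := 1 - (X : C[X]) • N with hP
  have hPq : B.charpolyRev = P.det := rfl
  have hmap : P.map derivative = - N := by
    ext1 i j
    simp only [hP, hN, Matrix.map_apply, Matrix.sub_apply, Matrix.smul_apply, Matrix.neg_apply,
      RingHom.mapMatrix_apply, smul_eq_mul, Matrix.one_apply]
    split_ifs <;> simp
  have htrN : ∀ k : ℕ, (N ^ (k + 1)).trace = 0 := by
    intro k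
    rw [hN, ← map_pow, RingHom.mapMatrix_apply, ← AddMonoidHom.map_trace, htr, map_zero]
  have hPadj : P.adjugate = P.det • (1 : Matrix (Fin d) (Fin d) C[X]) + (X : C[X]) • (N * P.adjugate) := by
    have h := Matrix.mul_adjugate P
    rw [← h]
    nth_rewrite 2 [hP]
    rw [sub_mul, one_mul, smul_mul_assoc, sub_add_cancel]
  have hstep : ∀ m : ℕ, (N ^ (m + 1) * P.adjugate).trace
      = (X : C[X]) * (N ^ (m + 2) * P.adjugate).trace := by
    intro m
    conv_lhs => rw [hPadj]
    rw [mul_add, Matrix.trace_add, mul_smul_comm, mul_one, Matrix.trace_smul, htrN, smul_zero,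
      zero_add, mul_smul_comm, Matrix.trace_smul, smul_eq_mul, ← mul_assoc, ← pow_succ]
  have hgeo : ∀ m : ℕ,
      (N * P.adjugate).trace = ((X : C[X]) ^ m) * (N ^ (m + 1) * P.adjugate).trace := by
    intro m
    induction m with
    | zero => simp
    | succ m ih => rw [ih, hstep, ← mul_assoc, ← pow_succ]
  have hder : derivative P.det = 0 := by
    rw [al_jacobi, hmap, mul_neg, Matrix.trace_neg, Matrix.trace_mul_comm, neg_eq_zero]
    ext k
    rw [hgeo (k + 1), coeff_X_pow_mul', if_neg (by omega), coeff_zero]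
  have hcoeff : ∀ k, k ≠ 0 → B.charpolyRev.coeff k = 0 := by
    intro k hk
    obtain ⟨k, rfl⟩ := Nat.exists_eq_succ_of_ne_zero hk
    have := congrArg (fun p => coeff p k) hder
    simp only [coeff_derivative, coeff_zero] at this
    rw [hPq]
    refine htf (k+1) (by omega) _ ?_
    rw [mul_comm]; push_cast; exact this
  have hcp : B.charpoly = X ^ d := by
    have hdeg : B.charpoly.natDegree = d := by simp
    ext k
    rw [coeff_X_pow]
    rcases lt_trichotomy k d with h | h | h
    · have := hcoeff (d - k) (by omega)
      rw [← Matrix.reverse_charpoly, coeff_reverse, hdeg, revAt_le (by omega),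
        Nat.sub_sub_self h.le] at this
      rw [this, if_neg h.ne]
    · subst h
      have := B.charpoly_monic
      rw [Monic, leadingCoeff, hdeg] at this
      simp [this]
    · rw [coeff_eq_zero_of_natDegree_lt (by omega), if_neg (by omega)]
  have := Matrix.aeval_self_charpoly B
  simpa [hcp] using this

theorem al_comm {K M : Type*} [CommRing K] [AddCommGroup M] [Module K M] (a b : M)  :
    ExteriorAlgebra.ι K a * ExteriorAlgebra.ι K b ∈ Subring.center (ExteriorAlgebra K M) := by
  rw [Subring.mem_center_iff]
  have h (x y : M) : ExteriorAlgebra.ι K x * ExteriorAlgebra.ι K y = - (ExteriorAlgebra.ι K y * ExteriorAlgebra.ι K x) :=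
    eq_neg_of_add_eq_zero_left (ExteriorAlgebra.ι_add_mul_swap x y)
  intro g
  induction g using ExteriorAlgebra.induction with
  | algebraMap r => exact Algebra.commutes _ _
  | ι x => rw [← mul_assoc, h x a, neg_mul, mul_assoc, h x b, mul_neg, neg_neg, mul_assoc]
  | mul x y hx hy => rw [mul_assoc, hy, ← mul_assoc, hx, mul_assoc]
  | add x y hx hy => rw [add_mul, mul_add, hx, hy]

theorem al_expand {K : Type*} [CommRing K] {d n : ℕ} (X : Fin n → Matrix (Fin d) (Fin d) K)
    (m : ℕ) (p q : Fin d) :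
    ((Matrix.of fun p q => ExteriorAlgebra.ι K (fun i => X i p q)) ^ m :
      Matrix (Fin d) (Fin d) (ExteriorAlgebra K (Fin n → K))) p q =
    ∑ f : Fin m → Fin n, (List.ofFn fun i => X (f i)).prod p q •
      ExteriorAlgebra.ιMulti K m (fun i => Pi.single (f i) (1 : K)) := by
  induction m generalizing p q with
  | zero => simp [Matrix.one_apply]
  | succ m ih =>
    rw [pow_succ', Matrix.mul_apply]
    have hι : ∀ p r, ExteriorAlgebra.ι K (fun i => X i p r) =
        ∑ i, X i p r • ExteriorAlgebra.ι K (Pi.single i (1 : K)) := by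
      intro p r
      conv_lhs => rw [← Finset.univ_sum_single (fun i => X i p r), map_sum]
      refine Finset.sum_congr rfl fun i _ => ?_
      rw [← map_smul, ← Pi.single_smul, smul_eq_mul, mul_one]
    simp only [ih]
    simp only [Matrix.of_apply, hι]
    rw [← (Fin.consEquiv (fun _ => Fin n)).sum_comp, Fintype.sum_prod_type]
    simp only [Fin.consEquiv_apply, List.ofFn_succ, Fin.cons_zero, Fin.cons_succ, List.prod_cons,
      Matrix.mul_apply, ExteriorAlgebra.ιMulti_succ_apply, Matrix.vecTail, Function.comp_def,
      Finset.sum_mul_sum, Finset.sum_smul]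
    rw [Finset.sum_comm]
    refine Finset.sum_congr rfl fun i _ => ?_
    rw [Finset.sum_comm]
    refine Finset.sum_congr rfl fun f _ => ?_
    refine Finset.sum_congr rfl fun r _ => ?_
    rw [smul_mul_smul_comm]

theorem al_coeff {K : Type*} [CommRing K] {d n : ℕ} (X : Fin n → Matrix (Fin d) (Fin d) K)
    (h : (Matrix.of fun p q => ExteriorAlgebra.ι K (fun i => X i p q) :
      Matrix (Fin d) (Fin d) (ExteriorAlgebra K (Fin n → K))) ^ n = 0) :
    ∑ σ : Equiv.Perm (Fin n),
      (Equiv.Perm.sign σ : ℤ) • ((List.finRange n).map (fun i => X (σ i))).prod = 0 := by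
  ext p q
  have h1 := al_expand X n p q
  rw [h] at h1
  let D : ∀ i, (Fin n → K) [⋀^Fin i]→ₗ[K] K := fun i =>
    if hi : i = n then hi ▸ Matrix.detRowAlternating else 0
  have h2 := congrArg (ExteriorAlgebra.liftAlternating D) h1
  have hD : D n = Matrix.detRowAlternating := by simp [D]
  simp only [map_sum, map_smul, ExteriorAlgebra.liftAlternating_apply_ιMulti, hD,
    Matrix.zero_apply, map_zero] at h2
  rw [Matrix.zero_apply, h2, Matrix.sum_apply]
  refine Fintype.sum_of_injective (fun σ : Equiv.Perm (Fin n) => (σ : Fin n → Fin n))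
    DFunLike.coe_injective _ _ ?_ ?_
  · intro f hf
    have : ¬ Function.Injective f := fun hi => hf
      ⟨Equiv.ofBijective f (Finite.injective_iff_bijective.1 hi), rfl⟩
    rw [Function.Injective] at this
    push Not at this
    obtain ⟨a, b, hab, hne⟩ := this
    rw [AlternatingMap.map_eq_zero_of_eq _ _ (by simp [hab]) hne, smul_zero]
  · intro σ
    have : Matrix.detRowAlternating (fun i => Pi.single (σ i) (1 : K)) = ((Equiv.Perm.sign σ : ℤ) : K) := by
      rw [← Matrix.det_permutation]
      change Matrix.det _ = _
      congr 1
      ext i j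
      simp [Equiv.Perm.permMatrix, PEquiv.toMatrix_apply, Pi.single_apply, eq_comm]
    rw [this, Matrix.smul_apply, zsmul_eq_mul, smul_eq_mul, mul_comm, List.ofFn_eq_map]

theorem al_Q (K : Type*) [CommRing K] [Algebra ℚ K] (d : ℕ)
    (X : Fin (2 * d) → Matrix (Fin d) (Fin d) K) :
    ∑ σ : Equiv.Perm (Fin (2 * d)),
      (Equiv.Perm.sign σ : ℤ) • ((List.finRange (2 * d)).map (fun i => X (σ i))).prod = 0 := by
  apply al_coeff
  set E := ExteriorAlgebra K (Fin (2 * d) → K)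
  set A : Matrix (Fin d) (Fin d) E := Matrix.of fun p q => ExteriorAlgebra.ι K (fun i => X i p q) with hA
  have hE : ∀ n : ℕ, n ≠ 0 → ∀ x : E, (n : E) * x = 0 → x = 0 := by
    intro n hn x hx
    have h1 : algebraMap K E (algebraMap ℚ K (n : ℚ)⁻¹) * (n : E) = 1 := by
      have : (n : E) = algebraMap K E (algebraMap ℚ K (n : ℚ)) := by simp
      rw [this, ← map_mul, ← map_mul, inv_mul_cancel₀ (by exact_mod_cast hn), map_one, map_one]
    rw [← one_mul x, ← h1, mul_assoc, hx, mul_zero]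
  have hcen : ∀ p q, (A ^ 2) p q ∈ Subring.center E := by
    intro p q
    rw [pow_two, Matrix.mul_apply]
    exact Subring.sum_mem _ fun r _ => al_comm _ _
  let B : Matrix (Fin d) (Fin d) (Subring.center E) := Matrix.of fun p q => ⟨(A ^ 2) p q, hcen p q⟩
  have hB : (Subring.center E).subtype.mapMatrix B = A ^ 2 := by
    ext p q; rfl
  have hBk : ∀ k, (Subring.center E).subtype.mapMatrix (B ^ k) = A ^ (2 * k) := by
    intro k; rw [map_pow, hB, pow_mul]
  have htr : ∀ k : ℕ, (B ^ (k + 1)).trace = 0 := by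
    intro k
    apply Subtype.val_injective
    have h1 : ((B ^ (k + 1)).trace : E) = (A ^ (2 * (k + 1))).trace := by
      rw [← hBk, RingHom.mapMatrix_apply, ← AddMonoidHom.map_trace]; rfl
    rw [h1]
    have hk : ∀ p q, (A ^ (2 * k)) p q ∈ Subring.center E := by
      intro p q; rw [← hBk]; exact ((B ^ k) p q).2
    have hanti : ∀ p q r s, A p q * (A * A ^ (2 * k)) r s = - ((A * A ^ (2 * k)) r s * A p q) := by
      intro p q r s
      rw [Matrix.mul_apply, Finset.mul_sum, Finset.sum_mul, ← Finset.sum_neg_distrib]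
      refine Finset.sum_congr rfl fun t _ => ?_
      have h2 := Subring.mem_center_iff.1 (hk t s) (A p q)
      have h3 : A p q * A r t = - (A r t * A p q) :=
        eq_neg_of_add_eq_zero_left (ExteriorAlgebra.ι_add_mul_swap _ _)
      rw [← mul_assoc, h3, mul_assoc, ← h2, neg_mul, mul_assoc]
    have h4 : (A * (A * A ^ (2 * k))).trace = - ((A * A ^ (2 * k)) * A).trace := by
      simp only [Matrix.trace, Matrix.diag_apply]
      generalize A * A ^ (2 * k) = G at hanti ⊢
      simp only [Matrix.mul_apply, hanti, Finset.sum_neg_distrib]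
      rw [Finset.sum_comm]
    rw [← pow_succ', ← pow_succ', ← pow_succ] at h4
    refine hE 2 (by norm_num) _ ?_
    rw [Nat.cast_ofNat, two_mul]
    exact eq_neg_iff_add_eq_zero.1 h4
  have h0 := al_nilp (C := Subring.center E) (fun n hn x hx => Subtype.val_injective
    (hE n hn x (by simpa using congrArg Subtype.val hx))) B htr
  rw [← hBk, h0, map_zero]

theorem al_map {S T : Type*} [CommRing S] [CommRing T] (φ : S →+* T) (d : ℕ)
    (Y : Fin (2 * d) → Matrix (Fin d) (Fin d) S) :
    φ.mapMatrix (∑ σ : Equiv.Perm (Fin (2 * d)),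
      (Equiv.Perm.sign σ : ℤ) • ((List.finRange (2 * d)).map (fun i => Y (σ i))).prod) =
    ∑ σ : Equiv.Perm (Fin (2 * d)),
      (Equiv.Perm.sign σ : ℤ) • ((List.finRange (2 * d)).map
        (fun i => φ.mapMatrix (Y (σ i)))).prod := by
  simp only [map_sum, map_zsmul, map_list_prod, List.map_map, Function.comp_def]

/-- **Amitsur–Levitsky theorem.** For any `2d` matrices of size `d × d` over a commutative
ring `R`, the signed sum over all permutations `σ` of the ordered products
`X (σ 0) * X (σ 1) * ⋯ * X (σ (2d-1))` vanishes. -/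
theorem amitsur_levitsky
    (R : Type*) [CommRing R] (d : ℕ) (hd : 1 ≤ d)
    (X : Fin (2 * d) → Matrix (Fin d) (Fin d) R) :
    ∑ σ : Equiv.Perm (Fin (2 * d)),
      (Equiv.Perm.sign σ : ℤ) • ((List.finRange (2 * d)).map (fun i => X (σ i))).prod = 0 := by
  let V := Fin (2 * d) × Fin d × Fin d
  let Y : Fin (2 * d) → Matrix (Fin d) (Fin d) (MvPolynomial V ℤ) :=
    fun k => Matrix.of fun p q => MvPolynomial.X (k, p, q)
  have hinj : Function.Injective (MvPolynomial.map (σ := V) (Int.castRingHom ℚ)) :=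
    MvPolynomial.map_injective _ Int.cast_injective
  have h1 := al_map (MvPolynomial.map (σ := V) (Int.castRingHom ℚ)) d Y
  replace h1 := h1.trans (al_Q (MvPolynomial V ℚ) d (fun k => (MvPolynomial.map (Int.castRingHom ℚ)).mapMatrix (Y k)))
  have h2 : ∑ σ : Equiv.Perm (Fin (2 * d)),
      (Equiv.Perm.sign σ : ℤ) • ((List.finRange (2 * d)).map (fun i => Y (σ i))).prod = 0 := by
    ext1 p q
    apply hinj
    rw [Matrix.zero_apply, map_zero]
    exact congrFun (congrFun h1 p) q
  have h3 := al_map (MvPolynomial.eval₂Hom (Int.castRingHom R) (fun v : V => X v.1 v.2.1 v.2.2)) d Y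
  rw [h2, map_zero] at h3
  have h4 : ∀ k, (MvPolynomial.eval₂Hom (Int.castRingHom R)
      (fun v : V => X v.1 v.2.1 v.2.2)).mapMatrix (Y k) = X k := by
    intro k
    ext p q
    simp [Y]
  simp only [h4] at h3
  exact h3.symm
end

section
/- Let Σ be a finite alphabet, let d ≥ 1, let N ≥ 0, and let c be a real-valued coefficient function on the (finitely many) words over Σ of length at most N. Define, for an assignment X of d×d real matrices to the letters of Σ, the matrix F(X) = Σ_w c(w) · ∏X(w), where the sum ranges over all words w over Σ of length at most N. Suppose there exists ε > 0 such that F(X) = 0 for every assignment X in which every entry of every matrix X(a), a ∈ Σ, has absolute value less than ε. Then for every n with 0 ≤ n ≤ N and every assignment X of d×d real matrices to the letters of Σ (with no restriction on norms), the homogeneous degree-n component Σ_{|w| = n} c(w) · ∏X(w) equals the zero matrix. -/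
/-- **Theorem (splitting by degree / homogeneity argument).** Let `c` assign real
coefficients to words over a finite alphabet, and suppose the finite sum
`F(X) = Σ_{|w| ≤ N} c w • ∏ X(w)` vanishes for every assignment `X` of `d × d` real
matrices all of whose entries have absolute value less than some `ε > 0`.  Then every
homogeneous component `Σ_{|w| = n} c w • ∏ X(w)` (for `n ≤ N`) vanishes for *all*
assignments of `d × d` real matrices. -/
theorem homogeneous_components_vanish
    {α : Type*} [Fintype α] (d N : ℕ) (hd : 1 ≤ d)
    (c : List α → ℝ)
    (h : ∃ ε > (0 : ℝ), ∀ X : α → Matrix (Fin d) (Fin d) ℝ,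
      (∀ (a : α) (i j : Fin d), |X a i j| < ε) →
      (∑ᶠ w ∈ {w : List α | w.length ≤ N}, c w • (w.map X).prod) = 0) :
    ∀ n ≤ N, ∀ X : α → Matrix (Fin d) (Fin d) ℝ,
      (∑ᶠ w ∈ {w : List α | w.length = n}, c w • (w.map X).prod) = 0 := by
  obtain ⟨ε, hε, h⟩ := h
  intro n hn X
  have key : ∀ t : ℝ, (∑ᶠ w ∈ {w : List α | w.length ≤ N},
      c w • (w.map (fun a => t • X a)).prod) = ∑ k ∈ Finset.range (N + 1),
      t ^ k • ∑ᶠ w ∈ {w : List α | w.length = k}, c w • (w.map X).prod := by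
    intro t
    have hprod : ∀ w : List α, (w.map (fun a => t • X a)).prod
        = t ^ w.length • (w.map X).prod := by
      intro w
      induction w with
      | nil => simp
      | cons a w ih =>
        simp only [List.map_cons, List.prod_cons, List.length_cons, ih, smul_mul_smul_comm]
        rw [pow_succ']
    rw [finsum_mem_eq_finite_toFinset_sum _ (List.finite_length_le α N)]
    rw [← Finset.sum_fiberwise_of_maps_to (t := Finset.range (N + 1))
      (g := List.length) (by intro w hw; simpa [Nat.lt_succ_iff] using hw)]
    refine Finset.sum_congr rfl fun k hk => ?_
    have hk' : k ≤ N := by simpa [Nat.lt_succ_iff] using hk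
    rw [finsum_mem_eq_finite_toFinset_sum _ (List.finite_length_eq α k), Finset.smul_sum]
    refine Finset.sum_congr ?_ ?_
    · ext w
      simp only [Finset.mem_filter, Set.Finite.mem_toFinset, Set.mem_setOf_eq]
      omega
    · intro w hw
      have hw' : w.length = k := by simpa using hw
      rw [hprod, hw', smul_comm]
  set G : ℕ → Matrix (Fin d) (Fin d) ℝ := fun k =>
    ∑ᶠ w ∈ {w : List α | w.length = k}, c w • (w.map X).prod with hG
  change G n = 0
  ext i j
  set M : ℝ := ∑ a, ∑ i, ∑ j, |X a i j| with hM
  have hle : ∀ a i j, |X a i j| ≤ M := by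
    intro a i j
    calc |X a i j| ≤ ∑ j, |X a i j| :=
          Finset.single_le_sum (f := fun j => |X a i j|) (fun _ _ => abs_nonneg _)
            (Finset.mem_univ j)
      _ ≤ ∑ i, ∑ j, |X a i j| :=
          Finset.single_le_sum (f := fun i => ∑ j, |X a i j|)
            (fun _ _ => Finset.sum_nonneg fun _ _ => abs_nonneg _) (Finset.mem_univ i)
      _ ≤ M :=
          Finset.single_le_sum (f := fun a => ∑ i, ∑ j, |X a i j|)
            (fun _ _ => Finset.sum_nonneg fun _ _ => Finset.sum_nonneg fun _ _ => abs_nonneg _)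
            (Finset.mem_univ a)
  have hM0 : 0 ≤ M := Finset.sum_nonneg fun _ _ => Finset.sum_nonneg fun _ _ =>
    Finset.sum_nonneg fun _ _ => abs_nonneg _
  let p : Polynomial ℝ := ∑ k ∈ Finset.range (N + 1), Polynomial.monomial k (G k i j)
  have hp : p = 0 := by
    apply Polynomial.eq_zero_of_infinite_isRoot
    refine (Set.Ioo_infinite (show (0 : ℝ) < ε / (M + 1) by positivity)).mono ?_
    intro t ht
    have h0 := h (fun a => t • X a) (by
      intro a i j
      have h1 : t * (M + 1) < ε := (lt_div_iff₀ (by positivity)).1 ht.2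
      rw [Matrix.smul_apply, smul_eq_mul, abs_mul, abs_of_pos ht.1]
      nlinarith [hle a i j, ht.1])
    rw [key t] at h0
    have h2 := congrFun (congrFun h0 i) j
    rw [Matrix.sum_apply] at h2
    simp only [Matrix.smul_apply, smul_eq_mul, Matrix.zero_apply] at h2
    simp only [Set.mem_setOf_eq, Polynomial.IsRoot, p, Polynomial.eval_finset_sum,
      Polynomial.eval_monomial]
    rw [← h2]
    exact Finset.sum_congr rfl fun k _ => mul_comm _ _
  have hc : p.coeff n = G n i j := by
    simp only [p, Polynomial.finset_sum_coeff, Polynomial.coeff_monomial]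
    rw [Finset.sum_ite_eq' , if_pos (Finset.mem_range.2 (by omega))]
  rw [← hc, hp]
  simp
end

section
/- Let Σ be a finite alphabet with k = |Σ| ≥ 1 letters, let d ≥ 1, let p ≥ 1 be a real number, and let L₁ and L₂ be languages over Σ such that for every n ≥ 0 each of L₁ and L₂ contains at most p^(2n) words of length n. Suppose there exists ε > 0 such that for every assignment X of d×d real matrices to the letters of Σ satisfying Σ_{a ∈ Σ} ‖X(a)‖₁ < ε (where ‖·‖₁ denotes the sum of the absolute values of all entries), the families (∏X(w))_{w ∈ L₁} and (∏X(w))_{w ∈ L₂} are summable and Σ_{w ∈ L₁} ∏X(w) = Σ_{w ∈ L₂} ∏X(w). Then for every n ≥ 0 and every assignment X of d×d real matrices to the letters of Σ (with no restriction on norms), the sum of ∏X(w) over the words w of length n in L₁ equals the sum of ∏X(w) over the words w of length n in L₂. -/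
open Filter Topology in
lemma slice_hasSum_aux {α : Type*} [Fintype α] (L : Set (List α)) (M : List α → ℝ) (t s : ℝ)
    (h : HasSum (fun w : L => t ^ (w : List α).length * M w) s) :
    HasSum (fun n : ℕ => t ^ n * ∑ᶠ w ∈ {w ∈ L | w.length = n}, M w) s := by
  refine ((Equiv.sigmaFiberEquiv (fun w : L => (w : List α).length)).hasSum_iff.mpr h).sigma ?_
  intro n
  have hfin : ({w : List α | w.length = n}).Finite := List.finite_length_eq α n
  have hfin' : ({w ∈ L | w.length = n}).Finite := hfin.subset (fun w hw => hw.2)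
  have : Finite {x : L // (x : List α).length = n} := by
    have := hfin'.to_subtype
    exact Finite.of_injective
      (fun x => (⟨x.1.1, x.1.2, x.2⟩ : {w : List α | w ∈ L ∧ w.length = n}))
      (by
        intro x y hxy
        apply Subtype.ext
        apply Subtype.ext
        exact congrArg (fun z => z.1) hxy)
  have := Fintype.ofFinite {x : L // (x : List α).length = n}
  have key : t ^ n * ∑ᶠ w ∈ {w ∈ L | w.length = n}, M w =
      ∑ x : {x : L // (x : List α).length = n}, t ^ (x.1 : List α).length * M x.1 := by
    rw [← finsum_mem_coe_finset, Finset.coe_univ, finsum_mem_univ] <;> try infer_instance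
    have e : ∀ x : {x : L // (x : List α).length = n},
        t ^ (x.1 : List α).length * M x.1 = t ^ n * M x.1 := fun x => by rw [x.2]
    rw [finsum_congr e, ← mul_finsum]
    congr 1
    rw [finsum_mem_eq_of_bijOn (s := Set.univ)
      (f := fun x : {x : L // (x : List α).length = n} => M x.1)
      (t := {w ∈ L | w.length = n}) (g := M) (fun x => x.1.1) ?_ (fun _ _ => rfl) |>.symm,
      finsum_mem_univ]
    refine ⟨fun x _ => ⟨x.1.2, x.2⟩, ?_, ?_⟩
    · intro x _ y _ hxy
      exact Subtype.ext (Subtype.ext hxy)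
    · intro w hw
      exact ⟨⟨⟨w, hw.1⟩, hw.2⟩, trivial, rfl⟩
  rw [key]
  exact hasSum_fintype _

open Filter Topology in
lemma coeff_zero_aux (e : ℕ → ℝ) (h : ∀ᶠ t in 𝓝 (0 : ℝ), HasSum (fun n => t ^ n * e n) 0)
    (n : ℕ) : e n = 0 := by
  have hp : HasFPowerSeriesAt (0 : ℝ → ℝ) (FormalMultilinearSeries.ofScalars ℝ e) 0 := by
    rw [hasFPowerSeriesAt_iff]
    filter_upwards [h] with t ht
    simpa [FormalMultilinearSeries.coeff_ofScalars] using ht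
  have := hp.eq_zero
  have h2 := FormalMultilinearSeries.coeff_ofScalars (𝕜 := ℝ) (p := e) (n := n)
  rw [this] at h2
  simpa [FormalMultilinearSeries.coeff] using h2.symm

lemma prod_smul_aux {α : Type*} {d : ℕ} (X : α → Matrix (Fin d) (Fin d) ℝ) (t : ℝ) (w : List α) :
    (w.map (fun a => t • X a)).prod = t ^ w.length • (w.map X).prod := by
  induction w with
  | nil => simp
  | cons a w ih => simp [ih, smul_smul, pow_succ]

lemma finsum_entry_aux {α : Type*} {d : ℕ} (s : Set (List α)) (hs : s.Finite)
    (F : List α → Matrix (Fin d) (Fin d) ℝ) (i j : Fin d) :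
    (∑ᶠ w ∈ s, F w) i j = ∑ᶠ w ∈ s, F w i j := by
  rw [finsum_mem_eq_finite_toFinset_sum _ hs, finsum_mem_eq_finite_toFinset_sum _ hs,
    Matrix.sum_apply]

/-- **Theorem.** Let `L₁, L₂` be languages over a finite alphabet with `k ≥ 1` letters,
each having at most `p^(2n)` words of length `n` (`p ≥ 1`). If there is `ε > 0` such that
for every assignment `X` of `d × d` real matrices to the letters with total entrywise
`ℓ¹` norm `Σ_a ‖X a‖₁ < ε`, the families `(∏X(w))_{w ∈ Lᵢ}` are summable with equal sums,
then for every `n` and *every* assignment `X` of `d × d` real matrices, the sum of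
`∏X(w)` over the length-`n` words of `L₁` equals the corresponding sum for `L₂`. -/
theorem slice_sums_eq_of_sums_eq_near_origin
    {α : Type*} [Fintype α] (hk : 1 ≤ Fintype.card α) (d : ℕ) (hd : 1 ≤ d)
    (p : ℝ) (hp : 1 ≤ p) (L₁ L₂ : Set (List α))
    (h₁ : ∀ n : ℕ, (({w ∈ L₁ | w.length = n}).ncard : ℝ) ≤ p ^ (2 * n))
    (h₂ : ∀ n : ℕ, (({w ∈ L₂ | w.length = n}).ncard : ℝ) ≤ p ^ (2 * n))
    (h : ∃ ε > (0 : ℝ), ∀ X : α → Matrix (Fin d) (Fin d) ℝ,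
      (∑ a : α, ∑ i : Fin d, ∑ j : Fin d, |X a i j|) < ε →
      (Summable fun w : L₁ => ((w : List α).map X).prod) ∧
      (Summable fun w : L₂ => ((w : List α).map X).prod) ∧
      (∑' w : L₁, ((w : List α).map X).prod) = ∑' w : L₂, ((w : List α).map X).prod) :
    ∀ (n : ℕ) (X : α → Matrix (Fin d) (Fin d) ℝ),
      (∑ᶠ w ∈ {w ∈ L₁ | w.length = n}, (w.map X).prod) =
      (∑ᶠ w ∈ {w ∈ L₂ | w.length = n}, (w.map X).prod) := by
  obtain ⟨ε, hε, h⟩ := h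
  intro n X
  have fin : ∀ L : Set (List α), ({w ∈ L | w.length = n}).Finite := fun L =>
    (List.finite_length_eq α n).subset (fun w hw => hw.2)
  ext i j
  rw [finsum_entry_aux _ (fin _), finsum_entry_aux _ (fin _), ← sub_eq_zero]
  refine coeff_zero_aux (fun n => (∑ᶠ w ∈ {w ∈ L₁ | w.length = n}, (w.map X).prod i j) -
      (∑ᶠ w ∈ {w ∈ L₂ | w.length = n}, (w.map X).prod i j)) ?_ n
  have hc : Continuous fun t : ℝ =>
      ∑ a : α, ∑ i : Fin d, ∑ j : Fin d, |(t • X a) i j| := by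
    simp only [Matrix.smul_apply]
    fun_prop
  have hev := hc.continuousAt.eventually_lt (x₀ := (0 : ℝ)) (continuousAt_const (y := ε))
    (by simpa using hε)
  filter_upwards [hev] with t ht
  obtain ⟨s1, s2, hs⟩ := h (fun a => t • X a) ht
  have g1 := s1.hasSum
  have g2 := s2.hasSum
  rw [← hs] at g2
  have g1' := slice_hasSum_aux L₁ (fun w => (w.map X).prod i j) t _ (by
    simpa [prod_smul_aux] using Pi.hasSum.1 (Pi.hasSum.1 g1 i) j)
  have g2' := slice_hasSum_aux L₂ (fun w => (w.map X).prod i j) t _ (by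
    simpa [prod_smul_aux] using Pi.hasSum.1 (Pi.hasSum.1 g2 i) j)
  simpa [mul_sub] using g1'.sub g2'
end

section
/- Let k ≥ 1, let ε > 0, and let c : (Fin k → ℕ) → ℝ be a coefficient function. Suppose that for every x : Fin k → ℝ with |x(i)| < ε for all i, the family (c(f) · ∏_{i} x(i)^{f(i)})_{f : Fin k → ℕ} is absolutely summable and its sum is 0. Then c(f) = 0 for every f : Fin k → ℕ. -/
theorem one_var_aux (ε : ℝ) (hε : 0 < ε) (a : ℕ → ℝ)
    (h : ∀ t : ℝ, |t| < ε → HasSum (fun n => t ^ n * a n) 0) (n : ℕ) : a n = 0 := by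
  let p : FormalMultilinearSeries ℝ ℝ ℝ :=
    fun n => ContinuousMultilinearMap.mkPiRing ℝ (Fin n) (a n)
  have hc : ∀ n, p.coeff n = a n := by
    intro n
    simp [p, FormalMultilinearSeries.coeff]
  have hp : HasFPowerSeriesAt (0 : ℝ → ℝ) p 0 := by
    rw [hasFPowerSeriesAt_iff]
    filter_upwards [Metric.ball_mem_nhds (0 : ℝ) hε] with t ht
    have ht' : |t| < ε := by simpa using ht
    simpa [hc] using h t ht'
  have h0 := hp.eq_zero
  rw [← hc n, h0]
  simp [FormalMultilinearSeries.coeff]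

theorem multi_var_aux (ε : ℝ) (hε : 0 < ε) (k : ℕ) : ∀ (c : (Fin k → ℕ) → ℝ)
    (_ : ∀ x : Fin k → ℝ, (∀ i : Fin k, |x i| < ε) →
      HasSum (fun f : Fin k → ℕ => c f * ∏ i : Fin k, x i ^ f i) 0),
    ∀ f : Fin k → ℕ, c f = 0 := by
  induction k with
  | zero =>
    intro c h f
    have h1 := h 0 (fun i => i.elim0)
    have h2 := hasSum_unique (fun f : Fin 0 → ℕ => c f * ∏ i : Fin 0, (0 : Fin 0 → ℝ) i ^ f i)
    have h3 := h2.unique h1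
    simp only [Finset.univ_eq_empty, Finset.prod_empty, mul_one] at h3
    exact (congrArg c (Subsingleton.elim f _)).trans h3
  | succ k ih =>
    intro c h f
    have key : ∀ x : Fin k → ℝ, (∀ i, |x i| < ε) → ∀ t : ℝ, |t| < ε →
        HasSum (fun q : ℕ × (Fin k → ℕ) =>
          t ^ q.1 * (c (Fin.cons q.1 q.2) * ∏ i, x i ^ q.2 i)) 0 := by
      intro x hx t ht
      have h1 := h (Fin.cons t x) (fun i => by
        refine Fin.cases ?_ (fun j => ?_) i
        · simpa using ht
        · simpa using hx j)
      rw [← (Fin.consEquiv (fun _ : Fin (k + 1) => ℕ)).hasSum_iff] at h1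
      convert h1 using 1
      funext q
      simp [Fin.consEquiv, Fin.prod_univ_succ]
      ring
    have hs : ∀ x : Fin k → ℝ, (∀ i, |x i| < ε) → ∀ n : ℕ,
        Summable (fun g : Fin k → ℕ => c (Fin.cons n g) * ∏ i, x i ^ g i) := by
      intro x hx n
      have ht : |ε / 2| < ε := by rw [abs_of_pos (by positivity)]; linarith
      have h1 := (key x hx (ε / 2) ht).summable.prod_factor n
      have hne : (ε / 2) ^ n ≠ 0 := by positivity
      have h2 := h1.mul_left (((ε / 2) ^ n)⁻¹)
      refine h2.congr (fun g => ?_)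
      exact (inv_mul_cancel_left₀ hne _)
    have hz : ∀ n : ℕ, ∀ x : Fin k → ℝ, (∀ i, |x i| < ε) →
        HasSum (fun g : Fin k → ℕ => c (Fin.cons n g) * ∏ i, x i ^ g i) 0 := by
      intro n x hx
      have h2 := one_var_aux ε hε
        (fun n => ∑' g : Fin k → ℕ, c (Fin.cons n g) * ∏ i, x i ^ g i)
        (fun t ht => (key x hx t ht).prod_fiberwise
          (fun m => (hs x hx m).hasSum.mul_left (t ^ m))) n
      have h3 := (hs x hx n).hasSum
      rwa [h2] at h3
    have := ih (fun g => c (Fin.cons (f 0) g)) (hz (f 0)) (Fin.tail f)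
    simpa using this

/-- **Theorem (identity principle for real power series in several variables).**
If for every `x : Fin k → ℝ` with all `|x i| < ε` the family
`f ↦ c f * ∏ i, (x i)^(f i)` (indexed by multi-indices `f : Fin k → ℕ`) is absolutely
summable with sum `0`, then all coefficients `c f` vanish. -/
theorem power_series_identity_principle
    (k : ℕ) (hk : 1 ≤ k) (ε : ℝ) (hε : 0 < ε) (c : (Fin k → ℕ) → ℝ)
    (h : ∀ x : Fin k → ℝ, (∀ i : Fin k, |x i| < ε) →
      (Summable fun f : Fin k → ℕ => |c f * ∏ i : Fin k, x i ^ f i|) ∧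
      (∑' f : Fin k → ℕ, c f * ∏ i : Fin k, x i ^ f i) = 0) :
    ∀ f : Fin k → ℕ, c f = 0 := by
  exact multi_var_aux ε hε k c (fun x hx => by
    have h1 := h x hx
    have h2 := h1.1.of_abs.hasSum
    rwa [h1.2] at h2)
end
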